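/- A choice function c on a finite nonempty set X is list rational if and only if it is a choice with competitive limited attention. -/

import Mathlib

open Finset

variable {X : Type*} [DecidableEq X]

/-- `a` is the `r`-greatest element among those satisfying `P`. -/
def IsRMax (r : X → X → Prop) (P : X → Prop) (a : X) : Prop :=
  P a ∧ ∀ y, P y → y ≠ a → r a y

/-- `a` is the `r`-least element among those satisfying `P`. -/
def IsRMin (r : X → X → Prop) (P : X → Prop) (a : X) : Prop :=
  P a ∧ ∀ y, P y → y ≠ a → r y a

def Asym (r : X → X → Prop) : Prop := ∀ x y, r x y → ¬ r y x

def StrictPartial (r : X → X → Prop) : Prop :=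
  Asym r ∧ ∀ x y z, r x y → r y z → r x z

def StrictLinear (r : X → X → Prop) : Prop :=
  StrictPartial r ∧ ∀ x y : X, x ≠ y → r x y ∨ r y x

/-- No cycle `x₁ ≻ x₂ ≻ … ≻ xₙ ≻ x₁` with `n ≥ 3`. -/
def Acyclic (r : X → X → Prop) : Prop :=
  ¬ ∃ (n : ℕ) (f : ℕ → X), 3 ≤ n ∧ (∀ i, i + 1 < n → r (f i) (f (i + 1))) ∧
    r (f (n - 1)) (f 0)

def ChoiceFun (c : Finset X → X) : Prop :=
  ∀ A : Finset X, A.Nonempty → c A ∈ A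

def ChoiceCorr (Γ : Finset X → Finset X) : Prop :=
  ∀ A : Finset X, A.Nonempty → (Γ A).Nonempty ∧ Γ A ⊆ A

/-- `x ∈ max(A, r)`: `x` is in `A` and is undominated in `A` w.r.t. `r`. -/
def MaxOf (r : X → X → Prop) (A : Finset X) (x : X) : Prop :=
  x ∈ A ∧ ∀ y ∈ A, ¬ r y x

/-- The pair `(gt, rhd)` describes `c` as a shortlisting. -/
def Describes (gt rhd : X → X → Prop) (c : Finset X → X) : Prop :=
  StrictPartial gt ∧ StrictLinear rhd ∧
    ∀ A : Finset X, A.Nonempty → IsRMax rhd (MaxOf gt A) (c A)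

def Shortlisting (c : Finset X → X) : Prop :=
  ∃ gt rhd : X → X → Prop, Describes gt rhd c

/-- Optimal attention filter. -/
def OptimalFilter (Γ : Finset X → Finset X) : Prop :=
  ChoiceCorr Γ ∧
  (∀ B : Finset X, B.Nonempty → ∀ x ∈ B, x ∉ Γ B → Γ (B.erase x) ⊆ Γ B) ∧
  (∀ B : Finset X, B.Nonempty → ∀ x ∈ B, ∀ y : X,
    y ∈ Γ {x, y} → y ∈ Γ (B.erase x) → y ∈ Γ B) ∧
  (∀ B : Finset X, B.Nonempty → ∀ x ∈ B, (B.erase x).Nonempty →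
    (Γ B).erase x ⊆ Γ (B.erase x))

/-- `(Γ, rhd)` is an explanation by optimal limited attention of `c`. -/
def ExplByOLA (Γ : Finset X → Finset X) (rhd : X → X → Prop) (c : Finset X → X) : Prop :=
  OptimalFilter Γ ∧ StrictLinear rhd ∧
    ∀ A : Finset X, A.Nonempty → IsRMax rhd (· ∈ Γ A) (c A)

/-- Choice with optimal limited attention. -/
def COLA (c : Finset X → X) : Prop :=
  ∃ (Γ : Finset X → Finset X) (rhd : X → X → Prop), ExplByOLA Γ rhd c

/-- Salient attention filter relative to `rhd`. -/
def SalientFilter (rhd : X → X → Prop) (Γ : Finset X → Finset X) : Prop :=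
  ChoiceCorr Γ ∧
  ∀ B : Finset X, B.Nonempty → ∀ x ∈ B,
    ¬ IsRMin rhd (· ∈ B) x → ¬ IsRMax rhd (· ∈ Γ B) x →
      (Γ B).erase x = Γ (B.erase x)

/-- `(Γ, rhd)` is an explanation by salient limited attention of `c`. -/
def ExplBySLA (Γ : Finset X → Finset X) (rhd : X → X → Prop) (c : Finset X → X) : Prop :=
  StrictLinear rhd ∧ SalientFilter rhd Γ ∧
    ∀ A : Finset X, A.Nonempty → IsRMax rhd (· ∈ Γ A) (c A)

/-- Choice with salient limited attention. -/
def CSLA (c : Finset X → X) : Prop :=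
  ∃ (Γ : Finset X → Finset X) (rhd : X → X → Prop), ExplBySLA Γ rhd c

/-- Selective salient attention filter relative to `rhd`. -/
def SelectiveFilter (rhd : X → X → Prop) (Γ : Finset X → Finset X) : Prop :=
  ChoiceCorr Γ ∧
  ∀ B : Finset X, B.Nonempty → ∀ x ∈ B,
    ¬ IsRMax rhd (· ∈ Γ B) x → (Γ B).erase x = Γ (B.erase x)

/-- Choice with selective salient limited attention. -/
def CSSLA (c : Finset X → X) : Prop :=
  ∃ (Γ : Finset X → Finset X) (rhd : X → X → Prop),
    StrictLinear rhd ∧ SelectiveFilter rhd Γ ∧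
      ∀ A : Finset X, A.Nonempty → IsRMax rhd (· ∈ Γ A) (c A)

def Rationalizable (c : Finset X → X) : Prop :=
  ∃ rhd : X → X → Prop, StrictLinear rhd ∧
    ∀ A : Finset X, A.Nonempty → IsRMax rhd (· ∈ A) (c A)

/-- Competitive attention filter relative to `rhd`. -/
def CompetitiveFilter (rhd : X → X → Prop) (Γ : Finset X → Finset X) : Prop :=
  ChoiceCorr Γ ∧
  (∀ A : Finset X, A.Nonempty → ∀ x ∈ A, x ∉ Γ A → Γ A = Γ (A.erase x)) ∧
  (∀ A : Finset X, 1 < A.card → ∀ x y : X,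
    IsRMax rhd (· ∈ A) y → IsRMax rhd (· ∈ Γ (A.erase y)) x →
      (y ∈ Γ {x, y} ↔ y ∈ Γ A))

/-- `(Γ, rhd)` is an explanation by competitive limited attention of `c`. -/
def ExplByCCLA (Γ : Finset X → Finset X) (rhd : X → X → Prop) (c : Finset X → X) : Prop :=
  StrictLinear rhd ∧ CompetitiveFilter rhd Γ ∧
    ∀ A : Finset X, A.Nonempty → IsRMax rhd (· ∈ Γ A) (c A)

/-- Choice with competitive limited attention. -/
def CCLA (c : Finset X → X) : Prop :=
  ∃ (Γ : Finset X → Finset X) (rhd : X → X → Prop), ExplByCCLA Γ rhd c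

/-- The list `f` list rationalizes `c`. -/
def ListRationalizes (f : X → X → Prop) (c : Finset X → X) : Prop :=
  StrictLinear f ∧
    ∀ A : Finset X, 1 < A.card → ∀ l : X, IsRMax f (· ∈ A) l →
      c A = c {c (A.erase l), l}

def ListRational (c : Finset X → X) : Prop :=
  ∃ f : X → X → Prop, ListRationalizes f c

/-- `(u, v, W)` is a general-temptation representation of `c`. -/
def GTRrep (c : Finset X → X) (u v : X → ℝ) (W : ℝ → ℝ → ℝ) : Prop :=
  (∀ r s : ℝ, 0 ≤ W r s) ∧
  (∀ r₁ r₂ s : ℝ, r₁ < r₂ → W r₁ s < W r₂ s) ∧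
  (∀ r s₁ s₂ : ℝ, s₁ < s₂ → W r s₁ < W r s₂) ∧
  ∀ (A : Finset X) (hA : A.Nonempty),
    c A ∈ A ∧ ∀ x ∈ A, x ≠ c A →
      W (u x) (v x - A.sup' hA v) < W (u (c A)) (v (c A) - A.sup' hA v)

def HasGTR (c : Finset X → X) : Prop :=
  ∃ (u v : X → ℝ) (W : ℝ → ℝ → ℝ), GTRrep c u v W

/-- `(gg, U)` is a conspicuity based endogenous reference representation of `c`. -/
def CERrep (c : Finset X → X) (gg : X → X → Prop) (U : X → X → ℝ) : Prop :=
  StrictLinear gg ∧ (∀ z : X, Function.Injective (U z)) ∧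
  ∀ A : Finset X, A.Nonempty → ∀ m : X, IsRMax gg (· ∈ A) m →
    c A ∈ A ∧ ∀ x ∈ A, x ≠ c A → U m x < U m (c A)

def HasCER (c : Finset X → X) : Prop :=
  ∃ (gg : X → X → Prop) (U : X → X → ℝ), CERrep c gg U

/-- `(A, B)` is a switch of `c`. -/
def Switch (c : Finset X → X) (A B : Finset X) : Prop :=
  A.Nonempty ∧ A ⊆ B ∧ c B ∈ A ∧ c A ≠ c B

/-- Revealed salience: `x ⊨_c y`. -/
def RevSal (c : Finset X → X) (x y : X) : Prop :=
  ∃ A : Finset X, x ∈ A ∧ y ∈ A ∧ x ≠ c A ∧ c (A.erase x) ≠ c A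

/-- Axiom of Revealed Temptation. -/
def ART (c : Finset X → X) : Prop :=
  ∀ B : Finset X, B.Nonempty → ∃ x ∈ B,
    ∀ B' B'' : Finset X, x ∈ B' → B' ⊂ B'' → B'' ⊆ B → ¬ Switch c B' B''

/-- The revealed relation `R^c`. -/
def Rrel (c : Finset X → X) (x y : X) : Prop :=
  (∃ A : Finset X, A.Nonempty ∧ x = c (insert y A) ∧ x ≠ c A) ∨
  (∃ A : Finset X, A.Nonempty ∧ y = c (insert x A) ∧ x = c {x, y}) ∨
  (∃ A : Finset X, A.Nonempty ∧ y ≠ c (insert x A) ∧ y = c {x, y} ∧ y = c A)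

/-- The revealed-to-follow relation `F_c`. -/
def Frel (c : Finset X → X) (x y : X) : Prop :=
  (∃ A : Finset X, A.Nonempty ∧ x = c (insert y A) ∧ y = c {x, y}) ∨
  (∃ A : Finset X, A.Nonempty ∧ x = c (insert y A) ∧ x ≠ c A) ∨
  (∃ A : Finset X, A.Nonempty ∧ x ≠ c (insert y A) ∧ x = c {x, y} ∧ x = c A)

/-!
A single order serves both as the list and as the preference, `f x y` being read both as
"`x` comes after `y`" and as "`x` is preferred to `y`". The link is that the last alternative `l` of
a menu `A` receives attention if and only if it is chosen, since it beats everything else in `A`.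

Given an explanation, the competition property therefore says that `l` is chosen from `A` if and
only if it is chosen from `{c (A \ {l}), l}`. When it is not, it is ignored, and both choices are
`c (A \ {l})`. This is the list recursion.

Given a list, let the agent ignore exactly the alternatives that come after the choice. By the
recursion such an alternative can be deleted without changing the choice, so the attention set does
not change either, and the competition property is the recursion read backwards.
-/

section Order

omit [DecidableEq X]

variable {r : X → X → Prop} {P Q : X → Prop} {a b : X}

theorem Asym.ne (hr : Asym r) (hab : r a b) : a ≠ b := by
  rintro rfl
  exact hr a a hab hab

theorem IsRMax.eq (hr : Asym r) (ha : IsRMax r P a) (hb : IsRMax r P b) : a = b := by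
  by_contra hab
  exact hr a b (ha.2 b hb.1 (Ne.symm hab)) (hb.2 a ha.1 hab)

theorem IsRMax.anti (ha : IsRMax r P a) (hQP : ∀ ⦃y⦄, Q y → P y) (hQ : Q a) : IsRMax r Q a :=
  ⟨hQ, fun y hy => ha.2 y (hQP hy)⟩

theorem IsRMax.pred_iff_eq (hr : Asym r) (hb : IsRMax r P b) (ha : IsRMax r Q a)
    (hQP : ∀ ⦃y⦄, Q y → P y) : Q b ↔ a = b :=
  ⟨fun hQ => ha.eq hr (hb.anti hQP hQ), fun hab => hab ▸ ha.1⟩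

theorem StrictLinear.exists_isRMax (hr : StrictLinear r) {A : Finset X} (hA : A.Nonempty) :
    ∃ l, IsRMax r (· ∈ A) l := by
  obtain ⟨⟨hasymm, htrans⟩, htotal⟩ := hr
  have : IsStrictOrder X r :=
    { irrefl := fun x hx => hasymm x x hx hx
      trans := htrans }
  let _ : PartialOrder X := partialOrderOfSO r
  obtain ⟨l, hl⟩ := A.exists_minimal hA
  exact ⟨l, hl.prop, fun y hy hyl => (htotal l y hyl.symm).resolve_right (hl.not_lt hy)⟩

end Order

variable {c : Finset X → X} {f : X → X → Prop} {A : Finset X} {l x : X}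

namespace ChoiceFun

theorem choice_pair (hc : ChoiceFun c) (x y : X) : c {x, y} = x ∨ c {x, y} = y := by
  simpa only [mem_insert, mem_singleton] using hc {x, y} (insert_nonempty x {y})

theorem pair_choice_erase_subset (hc : ChoiceFun c) (hA : 1 < A.card) (hl : l ∈ A) :
    {c (A.erase l), l} ⊆ A :=
  insert_subset (mem_of_mem_erase (hc _ (one_lt_card_iff_nontrivial.1 hA).erase_nonempty))
    (singleton_subset_iff.2 hl)

end ChoiceFun

namespace ListRationalizes

theorem choice_erase_last (hc : ChoiceFun c) (hf : ListRationalizes f c)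
    (hl : IsRMax f (· ∈ A) l) (hne : c A ≠ l) : c (A.erase l) = c A := by
  have hcard : 1 < A.card := one_lt_card.2 ⟨c A, hc A ⟨l, hl.1⟩, l, hl.1, hne⟩
  rw [hf.2 A hcard l hl] at hne ⊢
  exact ((hc.choice_pair _ l).resolve_right hne).symm

theorem choice_erase_of_after (hc : ChoiceFun c) (hf : ListRationalizes f c) (hx : x ∈ A)
    (hxc : f x (c A)) : c (A.erase x) = c A := by
  obtain ⟨⟨hasymm, htrans⟩, -⟩ := hf.1
  induction A using Finset.strongInduction with
  | H A ih =>
    have hcA : c A ∈ A := hc A ⟨x, hx⟩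
    obtain ⟨l, hl⟩ := hf.1.exists_isRMax ⟨x, hx⟩
    obtain rfl | hxl := eq_or_ne x l
    · exact hf.choice_erase_last hc hl (hasymm.ne hxc).symm
    have hlc : l ≠ c A := hasymm.ne (htrans l x (c A) (hl.2 x hx hxl) hxc)
    have hlx : IsRMax f (· ∈ A.erase x) l :=
      hl.anti (erase_subset x A) (mem_erase.2 ⟨hxl.symm, hl.1⟩)
    have hcard : 1 < (A.erase x).card :=
      one_lt_card.2 ⟨l, hlx.1, c A, mem_erase.2 ⟨(hasymm.ne hxc).symm, hcA⟩, hlc⟩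
    have hrec : c ((A.erase l).erase x) = c (A.erase l) :=
      ih _ (erase_ssubset hl.1) (mem_erase.2 ⟨hxl, hx⟩)
        (by rwa [hf.choice_erase_last hc hl hlc.symm])
    calc c (A.erase x) = c {c ((A.erase x).erase l), l} := hf.2 _ hcard l hlx
      _ = c {c (A.erase l), l} := by rw [erase_right_comm, hrec]
      _ = c A := (hf.2 A (one_lt_card.2 ⟨l, hl.1, c A, hcA, hlc⟩) l hl).symm

end ListRationalizes

open scoped Classical in
/-- The attention filter induced by a list `f`: the agent ignores exactly the alternatives of the
menu that come after the chosen one. As the last alternative of a menu is its `f`-maximum, `f x y`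
means that `x` comes after `y`. -/
noncomputable def listFilter (f : X → X → Prop) (c : Finset X → X) (A : Finset X) : Finset X :=
  {x ∈ A | ¬ f x (c A)}

omit [DecidableEq X] in
theorem mem_listFilter : x ∈ listFilter f c A ↔ x ∈ A ∧ ¬ f x (c A) := by
  simp only [listFilter, mem_filter]

omit [DecidableEq X] in
theorem listFilter_subset : listFilter f c A ⊆ A :=
  fun _ hx => (mem_listFilter.1 hx).1

omit [DecidableEq X] in
theorem isRMax_listFilter (hc : ChoiceFun c) (hf : StrictLinear f) (hA : A.Nonempty) :
    IsRMax f (· ∈ listFilter f c A) (c A) :=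
  ⟨mem_listFilter.2 ⟨hc A hA, fun h => hf.1.1.ne h rfl⟩,
    fun y hy hne => (hf.2 y (c A) hne).resolve_left (mem_listFilter.1 hy).2⟩

namespace ListRationalizes

theorem listFilter_erase (hc : ChoiceFun c) (hf : ListRationalizes f c) (hx : x ∈ A)
    (hxA : x ∉ listFilter f c A) : listFilter f c (A.erase x) = listFilter f c A := by
  have hxc : f x (c A) := not_not.1 fun hxc => hxA (mem_listFilter.2 ⟨hx, hxc⟩)
  rw [← erase_eq_of_notMem hxA]
  ext y
  simp only [mem_listFilter, mem_erase, hf.choice_erase_of_after hc hx hxc, and_assoc]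

theorem competitiveFilter_listFilter (hc : ChoiceFun c) (hf : ListRationalizes f c) :
    CompetitiveFilter f (listFilter f c) := by
  refine ⟨fun A hA => ⟨⟨c A, (isRMax_listFilter hc hf.1 hA).1⟩, listFilter_subset⟩,
    fun A _ x hx hxA => (hf.listFilter_erase hc hx hxA).symm, fun A hA x l hl hx => ?_⟩
  have hne : (A.erase l).Nonempty := (one_lt_card_iff_nontrivial.1 hA).erase_nonempty
  obtain rfl : x = c (A.erase l) := hx.eq hf.1.1.1 (isRMax_listFilter hc hf.1 hne)
  have mem_iff {B : Finset X} (hBA : B ⊆ A) (hlB : l ∈ B) : l ∈ listFilter f c B ↔ c B = l :=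
    (hl.anti hBA hlB).pred_iff_eq hf.1.1.1 (isRMax_listFilter hc hf.1 ⟨l, hlB⟩) listFilter_subset
  rw [mem_iff (hc.pair_choice_erase_subset hA hl.1) (by simp), mem_iff Subset.rfl hl.1,
    hf.2 A hA l hl]

theorem explByCCLA_listFilter (hc : ChoiceFun c) (hf : ListRationalizes f c) :
    ExplByCCLA (listFilter f c) f c :=
  ⟨hf.1, hf.competitiveFilter_listFilter hc, fun _ => isRMax_listFilter hc hf.1⟩

end ListRationalizes

namespace ExplByCCLA

variable {Γ : Finset X → Finset X}

theorem choiceFun (h : ExplByCCLA Γ f c) : ChoiceFun c :=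
  fun A hA => (h.2.1.1 A hA).2 (h.2.2 A hA).1

theorem last_mem_iff (h : ExplByCCLA Γ f c) (hl : IsRMax f (· ∈ A) l) : l ∈ Γ A ↔ c A = l :=
  hl.pred_iff_eq h.1.1.1 (h.2.2 A ⟨l, hl.1⟩) (h.2.1.1 A ⟨l, hl.1⟩).2

theorem choice_erase (h : ExplByCCLA Γ f c) (hx : x ∈ A) (hxA : x ∉ Γ A) :
    c (A.erase x) = c A := by
  have ⟨hlin, ⟨_, hignore, _⟩, hmax⟩ := h
  have hA : A.Nonempty := ⟨x, hx⟩
  have hcx : c A ≠ x := fun hcx => hxA (hcx ▸ (hmax A hA).1)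
  have hmax_erase := hmax (A.erase x) ⟨c A, mem_erase.2 ⟨hcx, h.choiceFun A hA⟩⟩
  rw [← hignore A hA x hx hxA] at hmax_erase
  exact hmax_erase.eq hlin.1.1 (hmax A hA)

theorem listRationalizes (h : ExplByCCLA Γ f c) : ListRationalizes f c := by
  have ⟨hlin, ⟨_, _, hcompetitive⟩, hmax⟩ := h
  refine ⟨hlin, fun A hA l hl => ?_⟩
  have hne : (A.erase l).Nonempty := (one_lt_card_iff_nontrivial.1 hA).erase_nonempty
  have hpair : IsRMax f (· ∈ ({c (A.erase l), l} : Finset X)) l :=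
    hl.anti (h.choiceFun.pair_choice_erase_subset hA hl.1) (by simp)
  have hchosen : c {c (A.erase l), l} = l ↔ c A = l := by
    rw [← h.last_mem_iff hl, ← h.last_mem_iff hpair]
    exact hcompetitive A hA _ l hl (hmax _ hne)
  by_cases hcl : c A = l
  · rw [hcl, hchosen.2 hcl]
  · calc c A = c (A.erase l) := (h.choice_erase hl.1 (mt (h.last_mem_iff hl).1 hcl)).symm
      _ = c {c (A.erase l), l} :=
        ((h.choiceFun.choice_pair _ l).resolve_right (mt hchosen.1 hcl)).symm

end ExplByCCLA

theorem listRationalizes_iff_exists_explByCCLA (hc : ChoiceFun c) :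
    ListRationalizes f c ↔ ∃ Γ, ExplByCCLA Γ f c :=
  ⟨fun hf => ⟨listFilter f c, hf.explByCCLA_listFilter hc⟩, fun ⟨_, h⟩ => h.listRationalizes⟩

theorem stmt_11_general (c : Finset X → X) (hc : ChoiceFun c) : ListRational c ↔ CCLA c :=
  (exists_congr fun _ => listRationalizes_iff_exists_explByCCLA hc).trans exists_comm

theorem stmt_11 [Fintype X] [Nonempty X] (c : Finset X → X) (hc : ChoiceFun c) :
    ListRational c ↔ CCLA c :=
  stmt_11_general c hc
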